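/- Let γ ∈ (0, 1] and let L be an odd positive integer. Set θ_n = 2·arctan(√(1−γ²)·tan(nπ/L)) for n ∈ {1, …, L−1} and θ_0 = 0. Define complex-valued functions a_n of a real variable x by a_0(x) = 1, a_1(x) = x, and a_{n+1}(x) = x·(1 + e^{−iθ_n})·a_n(x) − e^{−iθ_n}·a_{n−1}(x) for n ∈ {1, …, L−1}. Then for every x ∈ ℝ, a_L(x) = T_L(x/γ) / T_L(1/γ). -/

import Mathlib

open Real

/-!
Put `s = √(1 - γ²)`, `A = 1 + s`, `B = 1 - s` (so `A + B = 2`, `A * B = γ²`) and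
`q = exp (2πi / L)`. Since `exp (-iθ_n) = (1 - i t) / (1 + i t)` with `t = s * tan (nπ/L)`, the
recurrence becomes
`(A qⁿ + B) a_{n+1} = 2x (qⁿ + 1) a_n - (A + B qⁿ) a_{n-1}`,
whose transfer matrix `X + qⁿ • Y` is affine in `qⁿ`, with `X = !![2x, -A; B, 0]` and
`Y = !![2x, -B; A, 0]`.

* The trace of the product of `X + v qʲ • Y` over `0 ≤ j < L` is a polynomial of degree at most `L`
  in `v`. By cyclicity of the trace it is invariant under `v ↦ q v`, so only its coefficients of
  degree `0` and `L` survive (`trace_coeff_eq_zero`). At `v = 1` the trace is therefore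
  `tr X ^ L + tr Y ^ L = 4 γ ^ L T_L (x / γ)` (`trace_transferProd_one`, `trace_pow_eq`).
* The substitution `n ↦ -n` exchanges the two outer coefficients of the recurrence; on matrices it
  is the anti-automorphism `flipMat` (`flipMat_transferProd`). It makes the product over one period
  so symmetric that its trace is twice the first entry of its value on the initial vector
  `(1, x)`, that is, `2 P a_L(x)` with `P = ∏ (A qʲ + B)`.

Hence `P a_L(x) = 2 γ ^ L T_L (x / γ)`. As `P` does not depend on `x` and `a_n(1) = 1` for all `n`,
taking `x = 1` gives `P = 2 γ ^ L T_L (1 / γ)`, which is nonzero.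
-/

namespace QuasiChebyshev

open scoped Matrix

/-! ### Products of affine transfer matrices and their traces -/

/-- Complex `2 × 2` matrices. -/
abbrev Mat := Matrix (Fin 2) (Fin 2) ℂ

/-- The ordered product `(X + v q^(m-1) • Y) * ⋯ * (X + v q • Y) * (X + v • Y)`. -/
def transferProd (q : ℂ) (X Y : Mat) : ℕ → ℂ → Mat
  | 0, _ => 1
  | m + 1, v => (X + (v * q ^ m) • Y) * transferProd q X Y m v

/-- The coefficient of `v ^ k` in `transferProd q X Y m v`, with `m` as the first index. -/
def coeffMat (q : ℂ) (X Y : Mat) : ℕ → ℕ → Mat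
  | 0, 0 => 1
  | 0, _ + 1 => 0
  | m + 1, 0 => X * coeffMat q X Y m 0
  | m + 1, k + 1 => X * coeffMat q X Y m (k + 1) + q ^ m • (Y * coeffMat q X Y m k)

lemma coeffMat_zero (q : ℂ) (X Y : Mat) (m : ℕ) : coeffMat q X Y m 0 = X ^ m := by
  induction m with
  | zero => simp [coeffMat]
  | succ m ih => rw [coeffMat, ih, pow_succ']

lemma coeffMat_of_lt (q : ℂ) (X Y : Mat) (m k : ℕ) (h : m < k) : coeffMat q X Y m k = 0 := by
  induction m generalizing k with
  | zero =>
    obtain ⟨k, rfl⟩ := Nat.exists_eq_succ_of_ne_zero (by omega : k ≠ 0)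
    rfl
  | succ m ih =>
    obtain ⟨k, rfl⟩ := Nat.exists_eq_succ_of_ne_zero (by omega : k ≠ 0)
    rw [coeffMat, ih _ (by omega), ih _ (by omega)]
    simp

lemma coeffMat_self (q : ℂ) (X Y : Mat) (m : ℕ) :
    coeffMat q X Y m m = (∏ j ∈ Finset.range m, q ^ j) • Y ^ m := by
  induction m with
  | zero => simp [coeffMat]
  | succ m ih =>
    rw [coeffMat, ih, coeffMat_of_lt q X Y m (m + 1) (by omega), Finset.prod_range_succ, pow_succ']
    simp [smul_smul, mul_comm]

lemma transferProd_eq_sum (q : ℂ) (X Y : Mat) (m : ℕ) (v : ℂ) :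
    transferProd q X Y m v = ∑ k ∈ Finset.range (m + 1), v ^ k • coeffMat q X Y m k := by
  induction m with
  | zero => simp [transferProd, coeffMat]
  | succ m ih =>
    have hX : X * transferProd q X Y m v =
        ∑ k ∈ Finset.range (m + 1), v ^ (k + 1) • (X * coeffMat q X Y m (k + 1))
          + X * coeffMat q X Y m 0 := by
      -- The additional term of index `m + 1` vanishes.
      have : transferProd q X Y m v
          = ∑ k ∈ Finset.range (m + 2), v ^ k • coeffMat q X Y m k := by
        rw [Finset.sum_range_succ, coeffMat_of_lt q X Y m (m + 1) (by omega), ih]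
        simp
      rw [this, Finset.sum_range_succ', mul_add, Finset.mul_sum]
      simp
    have hY : (v * q ^ m) • Y * transferProd q X Y m v =
        ∑ k ∈ Finset.range (m + 1), v ^ (k + 1) • (q ^ m • (Y * coeffMat q X Y m k)) := by
      rw [ih, Finset.mul_sum]
      refine Finset.sum_congr rfl fun k _ => ?_
      simp only [Matrix.smul_mul, Matrix.mul_smul, smul_smul]
      congr 1
      ring
    rw [transferProd, add_mul, hX, hY, Finset.sum_range_succ' _ (m + 1)]
    simp only [coeffMat, smul_add, Finset.sum_add_distrib, pow_zero, one_smul]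
    abel

lemma transferProd_succ' (q : ℂ) (X Y : Mat) (m : ℕ) (v : ℂ) :
    transferProd q X Y (m + 1) v = transferProd q X Y m (q * v) * (X + v • Y) := by
  induction m with
  | zero => simp [transferProd]
  | succ m ih =>
    rw [transferProd, ih, transferProd, show v * q ^ (m + 1) = q * v * q ^ m by ring,
      Matrix.mul_assoc]

/-- The coefficient form of `transferProd_succ'`: the first factor is split off on the right. -/
lemma coeffMat_succ' (q : ℂ) (X Y : Mat) (m k : ℕ) :
    coeffMat q X Y (m + 1) (k + 1) =
      q ^ (k + 1) • (coeffMat q X Y m (k + 1) * X) + q ^ k • (coeffMat q X Y m k * Y) := by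
  induction m generalizing k with
  | zero => cases k <;> simp [coeffMat]
  | succ m ih =>
    conv_lhs => rw [coeffMat, ih k]
    cases k with
    | zero =>
      simp only [coeffMat, coeffMat_zero, mul_add, add_mul, Matrix.smul_mul, Matrix.mul_smul,
        smul_smul, smul_add, mul_assoc, pow_mul_comm' X m]
      rw [show q ^ (0 + 1) * q ^ m = q ^ (m + 1) * q ^ 0 by ring]
      simp only [pow_zero, one_smul, mul_one]
      abel
    | succ k =>
      rw [ih k]
      conv_rhs => rw [coeffMat, ← ih k, coeffMat]
      simp only [mul_add, add_mul, Matrix.smul_mul, Matrix.mul_smul, smul_smul, smul_add,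
        mul_assoc]
      rw [show q ^ (m + 1) * q ^ (k + 1) = q ^ (k + 1 + 1) * q ^ m by ring,
        show q ^ (m + 1) * q ^ k = q ^ (k + 1) * q ^ m by ring]
      abel

/-- The trace is invariant under `v ↦ q v`, so its coefficients of degree strictly between `0` and
the order of `q` vanish. -/
lemma trace_coeff_eq_zero (q : ℂ) (X Y : Mat) (m k : ℕ) (hq : IsPrimitiveRoot q (m + 1))
    (hk : k < m) : (coeffMat q X Y (m + 1) (k + 1)).trace = 0 := by
  have h1 := congrArg Matrix.trace (coeffMat_succ' q X Y m k)
  have h2 : (coeffMat q X Y (m + 1) (k + 1)).trace = _ := congrArg Matrix.trace (by rw [coeffMat])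
  rw [Matrix.trace_add, Matrix.trace_smul, Matrix.trace_smul, Matrix.trace_mul_comm _ X,
    Matrix.trace_mul_comm _ Y] at h1
  rw [Matrix.trace_add, Matrix.trace_smul] at h2
  simp only [smul_eq_mul] at h1 h2
  have hne : q ^ (k + 1) ≠ 1 := hq.pow_ne_one_of_pos_of_lt (by omega) (by omega)
  have h3 : (q ^ (k + 1) - 1) * (coeffMat q X Y (m + 1) (k + 1)).trace = 0 := by
    have hqL := hq.pow_eq_one
    linear_combination q ^ (k + 1) * h2 - h1 + q ^ k * (Y * coeffMat q X Y m k).trace * hqL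
  exact (mul_eq_zero.mp h3).resolve_left (sub_ne_zero.mpr hne)

lemma prod_pow_eq_one {q : ℂ} {L : ℕ} (hq : q ^ L = 1) (hL : Odd L) :
    ∏ j ∈ Finset.range L, q ^ j = 1 := by
  obtain ⟨k, rfl⟩ := hL
  have h := Finset.sum_range_id_mul_two (2 * k + 1)
  have h' : ∑ j ∈ Finset.range (2 * k + 1), j = (2 * k + 1) * k := by
    have : (2 * k + 1) * (2 * k + 1 - 1) = (2 * k + 1) * k * 2 := by
      rw [Nat.add_sub_cancel]; ring
    omega
  rw [Finset.prod_pow_eq_pow_sum, h', pow_mul, hq, one_pow]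

lemma trace_transferProd_one (q : ℂ) (X Y : Mat) (m : ℕ) (hq : IsPrimitiveRoot q (m + 1))
    (hodd : Odd (m + 1)) :
    (transferProd q X Y (m + 1) 1).trace = (X ^ (m + 1)).trace + (Y ^ (m + 1)).trace := by
  rw [transferProd_eq_sum, Matrix.trace_sum, Finset.sum_range_succ, Finset.sum_range_succ',
    coeffMat_self, prod_pow_eq_one hq.pow_eq_one hodd, coeffMat_zero, Finset.sum_eq_zero]
  · simp
  · intro k hk
    rw [Matrix.trace_smul, trace_coeff_eq_zero q X Y m k hq (Finset.mem_range.mp hk), smul_zero]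

/-- By Cayley–Hamilton, the traces of the powers satisfy the rescaled Chebyshev recurrence. -/
lemma trace_pow_eq (γ x : ℝ) (hγ : γ ≠ 0) (A B : ℂ) (hAB : A * B = (γ : ℂ) ^ 2) (m : ℕ) :
    ((!![2 * (x : ℂ), -A; B, 0] : Mat) ^ m).trace =
      ((2 * γ ^ m * (Polynomial.Chebyshev.T ℝ m).eval (x / γ) : ℝ) : ℂ) := by
  induction m using Nat.twoStepInduction with
  | zero => simp
  | one =>
    have : (γ : ℂ) ≠ 0 := by exact_mod_cast hγ
    simp [Matrix.trace_fin_two]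
    field_simp
  | more m h0 h1 =>
    have hsq : (!![2 * (x : ℂ), -A; B, 0] : Mat) ^ 2 =
        (2 * (x : ℂ)) • (!![2 * (x : ℂ), -A; B, 0] : Mat) - ((γ : ℂ) ^ 2) • 1 := by
      rw [← hAB]
      ext i j
      fin_cases i <;> fin_cases j <;> simp [pow_two, Matrix.mul_apply, Fin.sum_univ_two] <;> ring
    rw [pow_add, hsq, mul_sub, Matrix.mul_smul, Matrix.mul_smul, mul_one, ← pow_succ,
      Matrix.trace_sub, Matrix.trace_smul, Matrix.trace_smul, h0, h1]
    push_cast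
    rw [Polynomial.Chebyshev.T_add_two]
    have : (γ : ℂ) ≠ 0 := by exact_mod_cast hγ
    simp
    field_simp
    ring

/-! ### Reversal of the recurrence -/

/-- Transposition followed by a sign change of the off-diagonal entries. For an invertible matrix
it is, up to the determinant, the inverse conjugated by the swap of the two coordinates: reversal
of the direction of a three-term recurrence. -/
def flipMat (M : Mat) : Mat := !![M 0 0, -M 1 0; -M 0 1, M 1 1]

lemma flipMat_mul (M N : Mat) : flipMat (M * N) = flipMat N * flipMat M := by
  ext i j
  fin_cases i <;> fin_cases j <;> simp [flipMat, Matrix.mul_apply, Fin.sum_univ_two] <;> ring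

lemma flipMat_add_smul (M N : Mat) (c : ℂ) :
    flipMat (M + c • N) = flipMat M + c • flipMat N := by
  ext i j
  fin_cases i <;> fin_cases j <;> simp [flipMat] <;> ring

/-- If `flipMat` exchanges `X` and `Y`, it inverts the parameters `v q ^ j` and reverses their
order: if `v'` is the inverse of the last
parameter `v q ^ (m - 1)`, the reversed product is again a transfer product, started at `v'`. -/
lemma flipMat_transferProd (q : ℂ) (hq : q ≠ 0) (X Y : Mat) (hX : flipMat X = Y)
    (hY : flipMat Y = X) (m : ℕ) (v v' : ℂ) (h : v * v' * q ^ m = q) :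
    flipMat (transferProd q X Y m v) =
      (∏ j ∈ Finset.range m, v * q ^ j) • transferProd q X Y m v' := by
  induction m generalizing v' with
  | zero =>
    ext i j
    fin_cases i <;> fin_cases j <;> simp [flipMat, transferProd]
  | succ m ih =>
    have hw : v * q ^ m * v' = 1 := mul_right_cancel₀ hq (by linear_combination h)
    have hN : flipMat (X + (v * q ^ m) • Y) = (v * q ^ m) • (X + v' • Y) := by
      rw [flipMat_add_smul, hX, hY, smul_add, smul_smul, hw, one_smul, add_comm]
    rw [transferProd, flipMat_mul, ih (q * v') (by linear_combination h), hN, transferProd_succ',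
      Finset.prod_range_succ, smul_mul_smul_comm]

/-! ### The solution after one period -/

/-- After one period, the value of the solution of the recurrence with `b 0 = 1` and `b 1 = x` is a
Chebyshev polynomial in `x / γ`, up to a factor independent of `x`. -/
lemma prod_mul_eq (γ x : ℝ) (hγ : γ ≠ 0) (A B : ℂ) (hAB : A * B = (γ : ℂ) ^ 2)
    (hsum : A + B = 2) (q : ℂ) (m : ℕ) (hq : IsPrimitiveRoot q (m + 1)) (hodd : Odd (m + 1))
    (b : ℕ → ℂ) (hb0 : b 0 = 1) (hb1 : b 1 = x)
    (hb : ∀ n, 1 ≤ n → n ≤ m → (A * q ^ n + B) * b (n + 1) =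
      2 * x * (q ^ n + 1) * b n - (A + B * q ^ n) * b (n - 1)) :
    (∏ j ∈ Finset.range (m + 1), (A * q ^ j + B)) * b (m + 1) =
      ((2 * γ ^ (m + 1) * (Polynomial.Chebyshev.T ℝ ((m + 1 : ℕ) : ℤ)).eval (x / γ) : ℝ) : ℂ) := by
  set X : Mat := !![2 * (x : ℂ), -A; B, 0] with hX
  set Y : Mat := !![2 * (x : ℂ), -B; A, 0] with hY
  have hq0 : q ≠ 0 := hq.ne_zero (by omega)
  have htr : (transferProd q X Y (m + 1) 1).trace = _ := trace_transferProd_one q X Y m hq hodd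
  rw [trace_pow_eq γ x hγ A B hAB, trace_pow_eq γ x hγ B A (by rw [mul_comm, hAB])] at htr
  -- The transfer product carries `(b 0, b (-1)) = (1, x)` to a multiple of `(b (n + 1), b n)`.
  have hsol : ∀ n, n ≤ m → transferProd q X Y (n + 1) 1 *ᵥ ![1, (x : ℂ)] =
      (∏ j ∈ Finset.range (n + 1), (A * q ^ j + B)) • ![b (n + 1), b n] := by
    intro n hn
    induction n with
    | zero =>
      ext i
      fin_cases i
      · simp [transferProd, hX, hY, Matrix.mulVec, dotProduct, Fin.sum_univ_two, hb1, hsum]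
        linear_combination -(x : ℂ) * hsum
      · simp [transferProd, hX, hY, Matrix.mulVec, dotProduct, Fin.sum_univ_two, hb0]
        ring
    | succ n ih =>
      have hrec := hb (n + 1) (by omega) hn
      rw [Nat.add_sub_cancel] at hrec
      rw [transferProd, ← Matrix.mulVec_mulVec, ih (by omega), Matrix.mulVec_smul,
        Finset.prod_range_succ _ (n + 1), mul_smul (Finset.prod _ _)]
      congr 1
      ext i
      fin_cases i
      · simp [hX, hY, Matrix.mulVec, dotProduct, Fin.sum_univ_two]
        linear_combination -hrec
      · simp [hX, hY, Matrix.mulVec, dotProduct, Fin.sum_univ_two]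
        left
        ring
  have hfirst := congrFun (hsol m le_rfl) 0
  -- The factors of index `1, …, m` are permuted by `j ↦ m + 1 - j`, so their product is symmetric.
  have hflip : flipMat (transferProd q X Y m q) = transferProd q X Y m q := by
    have h := flipMat_transferProd q hq0 X Y (by simp [flipMat, hX, hY])
      (by simp [flipMat, hX, hY]) m q q (by linear_combination q * hq.pow_eq_one)
    have hp := prod_pow_eq_one hq.pow_eq_one hodd
    rw [Finset.prod_range_succ'] at hp
    simp only [pow_zero, mul_one, pow_succ'] at hp
    rw [h, hp, one_smul]
  have hoff := congrFun (congrFun hflip 0) 1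
  rw [transferProd_succ', mul_one] at htr hfirst
  generalize transferProd q X Y m q = V at hoff htr hfirst
  simp [flipMat] at hoff
  simp [hX, hY, Matrix.trace_fin_two, Matrix.mul_apply, Fin.sum_univ_two, Matrix.mulVec,
    dotProduct] at htr hfirst
  push_cast
  linear_combination -hfirst + htr / 2 - (A + B) / 2 * hoff - V 0 0 * x * hsum

/-! ### The phases `exp (-iθ_n)` -/

lemma cexp_neg_two_arctan (t : ℝ) :
    (1 + t * Complex.I) * Complex.exp (-((2 * Real.arctan t : ℝ) : ℂ) * Complex.I) =
      1 - t * Complex.I := by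
  have hc : Real.cos (Real.arctan t) ≠ 0 := (Real.cos_arctan_pos t).ne'
  have hs : Real.sin (Real.arctan t) = t * Real.cos (Real.arctan t) := by
    have := Real.tan_arctan t
    rw [Real.tan_eq_sin_div_cos] at this
    field_simp at this
    linarith
  set α := Real.arctan t
  have hp : Complex.exp (α * Complex.I) = Real.cos α * (1 + t * Complex.I) := by
    rw [Complex.exp_mul_I, ← Complex.ofReal_cos, ← Complex.ofReal_sin, hs]
    push_cast
    ring
  have hm : Complex.exp (-α * Complex.I) = Real.cos α * (1 - t * Complex.I) := by
    rw [Complex.exp_mul_I, Complex.cos_neg, Complex.sin_neg, ← Complex.ofReal_cos,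
      ← Complex.ofReal_sin, hs]
    push_cast
    ring
  have hmul : Complex.exp (α * Complex.I) * Complex.exp (-((2 * α : ℝ) : ℂ) * Complex.I) =
      Complex.exp (-α * Complex.I) := by
    rw [← Complex.exp_add]
    congr 1
    push_cast
    ring
  rw [hp, hm, mul_assoc] at hmul
  exact mul_left_cancel₀ (by exact_mod_cast hc) hmul

/-- The tangents at `nπ/L` are finite because `L` is odd. -/
lemma cos_ne_zero_of_odd (L : ℕ) (hL : Odd L) (n : ℕ) : Real.cos (n * π / L) ≠ 0 := by
  intro h
  obtain ⟨k, hk⟩ := Real.cos_eq_zero_iff.mp h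
  have hL0 : (L : ℝ) ≠ 0 := by exact_mod_cast hL.pos.ne'
  have hπ := Real.pi_ne_zero
  field_simp at hk
  have hk' : (2 * n : ℤ) = L * (2 * k + 1) := by
    have : (2 * n : ℝ) = L * (2 * k + 1) := by linarith
    exact_mod_cast this
  obtain ⟨j, rfl⟩ := hL
  have : (2 * n : ℤ) = 2 * (2 * j * k + j + k) + 1 := by rw [hk']; push_cast; ring
  omega

/-- The recurrence after clearing the denominators `1 + i t` and `cos (nπ/L)`. -/
lemma recurrence_of_exp (s x : ℝ) (L : ℕ) (hL : Odd L) (n : ℕ) (b₀ b₁ b₂ : ℂ)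
    (h : b₂ = (x : ℂ) * (1 + Complex.exp
        (-((2 * Real.arctan (s * Real.tan (n * π / L)) : ℝ) : ℂ) * Complex.I)) * b₁ -
      Complex.exp (-((2 * Real.arctan (s * Real.tan (n * π / L)) : ℝ) : ℂ) * Complex.I) * b₀) :
    ((1 + s) * Complex.exp (2 * π * Complex.I / L) ^ n + (1 - s)) * b₂ =
      2 * x * (Complex.exp (2 * π * Complex.I / L) ^ n + 1) * b₁ -
        ((1 + s) + (1 - s) * Complex.exp (2 * π * Complex.I / L) ^ n) * b₀ := by
  have hc := cos_ne_zero_of_odd L hL n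
  have hE := cexp_neg_two_arctan (s * Real.tan (n * π / L))
  have hct : (Real.cos (n * π / L) : ℂ) * ((s * Real.tan (n * π / L) : ℝ) : ℂ) =
      s * Real.sin (n * π / L) := by
    norm_cast
    rw [Real.tan_eq_sin_div_cos]
    field_simp
  have hq : Complex.exp (2 * π * Complex.I / L) ^ n =
      (Real.cos (n * π / L) + Real.sin (n * π / L) * Complex.I) ^ 2 := by
    rw [← Complex.exp_nat_mul, Complex.ofReal_cos, Complex.ofReal_sin, ← Complex.exp_mul_I,
      ← Complex.exp_nat_mul]
    congr 1
    push_cast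
    ring
  have hone : (Real.cos (n * π / L) : ℂ) ^ 2 + (Real.sin (n * π / L) : ℂ) ^ 2 = 1 := by
    exact_mod_cast Real.cos_sq_add_sin_sq _
  rw [hq]
  generalize Complex.exp (-((2 * Real.arctan (s * Real.tan (n * π / L)) : ℝ) : ℂ) * Complex.I) = E
    at *
  generalize ((s * Real.tan (n * π / L) : ℝ) : ℂ) = t at *
  generalize (Real.cos (n * π / L) : ℂ) = c at *
  generalize (Real.sin (n * π / L) : ℂ) = d at *
  have hI := Complex.I_sq
  have h1 : (1 + t * Complex.I) * b₂ = 2 * x * b₁ - (1 - t * Complex.I) * b₀ := by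
    linear_combination (1 + t * Complex.I) * h + (x * b₁ - b₀) * hE
  have h2 : (c + s * d * Complex.I) * b₂ = 2 * x * c * b₁ - (c - s * d * Complex.I) * b₀ := by
    linear_combination c * h1 - Complex.I * (b₂ - b₀) * hct
  have e1 : (1 + s) * (c + d * Complex.I) ^ 2 + (1 - s) =
      2 * (c + d * Complex.I) * (c + s * d * Complex.I) := by
    linear_combination -(1 - s) * hone + (1 - s) * d ^ 2 * hI
  have e2 : (1 + s) + (1 - s) * (c + d * Complex.I) ^ 2 =
      2 * (c + d * Complex.I) * (c - s * d * Complex.I) := by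
    linear_combination -(1 + s) * hone + (1 + s) * d ^ 2 * hI
  have e3 : (c + d * Complex.I) ^ 2 + 1 = 2 * (c + d * Complex.I) * c := by
    linear_combination -hone + d ^ 2 * hI
  rw [e1, e2, e3]
  linear_combination 2 * (c + d * Complex.I) * h2

end QuasiChebyshev

open Real

/-- Let γ ∈ (0, 1], L an odd positive integer, θ_0 = 0 and
θ_n = 2·arctan(√(1−γ²)·tan(nπ/L)) for n ∈ {1,…,L−1}.  If a_0(x) = 1,
a_1(x) = x and a_{n+1}(x) = x(1 + e^{−iθ_n})a_n(x) − e^{−iθ_n}a_{n−1}(x) for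
n ∈ {1,…,L−1}, then a_L(x) = T_L(x/γ)/T_L(1/γ) for every x ∈ ℝ. -/
theorem quasi_chebyshev (γ : ℝ) (hγ : γ ∈ Set.Ioc 0 1)
    (L : ℕ) (hLpos : 0 < L) (hLodd : Odd L)
    (θ : ℕ → ℝ) (hθ0 : θ 0 = 0)
    (hθ : ∀ n : ℕ, 1 ≤ n → n ≤ L - 1 →
      θ n = 2 * Real.arctan (Real.sqrt (1 - γ ^ 2) * Real.tan (n * π / L)))
    (a : ℕ → ℝ → ℂ) (ha0 : ∀ x : ℝ, a 0 x = 1) (ha1 : ∀ x : ℝ, a 1 x = x)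
    (harec : ∀ n : ℕ, 1 ≤ n → n ≤ L - 1 → ∀ x : ℝ,
      a (n + 1) x = (x : ℂ) * (1 + Complex.exp (-(θ n : ℝ) * Complex.I)) * a n x -
        Complex.exp (-(θ n : ℝ) * Complex.I) * a (n - 1) x)
    (x : ℝ) :
    a L x = ((Polynomial.Chebyshev.T ℝ L).eval (x / γ) /
      (Polynomial.Chebyshev.T ℝ L).eval (1 / γ) : ℝ) := by
  have hγ0 : γ ≠ 0 := hγ.1.ne'
  obtain ⟨m, rfl⟩ : ∃ m, L = m + 1 := ⟨L - 1, by omega⟩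
  set s := Real.sqrt (1 - γ ^ 2) with hs
  have hs2 : s ^ 2 = 1 - γ ^ 2 := Real.sq_sqrt (by nlinarith [hγ.1, hγ.2])
  have hAB : (1 + (s : ℂ)) * (1 - s) = (γ : ℂ) ^ 2 := by
    have : ((s ^ 2 : ℝ) : ℂ) = ((1 - γ ^ 2 : ℝ) : ℂ) := by rw [hs2]
    push_cast at this
    linear_combination -this
  have key : ∀ y : ℝ, _ := fun y => QuasiChebyshev.prod_mul_eq γ y hγ0 (1 + (s : ℂ)) (1 - s) hAB
    (by ring) _ m (Complex.isPrimitiveRoot_exp (m + 1) (by omega)) hLodd (fun n => a n y) (ha0 y)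
    (ha1 y) fun n h1 h2 => by
      have h := harec n h1 (by omega) y
      rw [hθ n h1 (by omega)] at h
      exact QuasiChebyshev.recurrence_of_exp s y (m + 1) hLodd n _ _ _ h
  have hone : ∀ n, n ≤ m → a n 1 = 1 ∧ a (n + 1) 1 = 1 := by
    intro n hn
    induction n with
    | zero => simp [ha0, ha1]
    | succ n ih =>
      obtain ⟨h0, h1⟩ := ih (by omega)
      refine ⟨h1, ?_⟩
      rw [harec (n + 1) (by omega) (by omega), Nat.add_sub_cancel, h0, h1]
      push_cast
      ring
  have h1 := key 1
  have hx := key x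
  simp only [(hone m le_rfl).2, mul_one] at h1
  have hT : (Polynomial.Chebyshev.T ℝ ((m + 1 : ℕ) : ℤ)).eval (1 / γ) ≠ 0 := by
    have : (1 : ℝ) ≤ 1 / γ := by rw [le_div_iff₀ hγ.1]; linarith [hγ.2]
    have := Polynomial.Chebyshev.one_le_eval_T_real ((m + 1 : ℕ) : ℤ) this
    linarith
  rw [h1] at hx
  have hTc : (((Polynomial.Chebyshev.T ℝ ((m + 1 : ℕ) : ℤ)).eval (1 / γ) : ℝ) : ℂ) ≠ 0 := by
    exact_mod_cast hT
  have hγc : (γ : ℂ) ^ (m + 1) ≠ 0 := pow_ne_zero _ (by exact_mod_cast hγ0)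
  rw [Complex.ofReal_div, eq_div_iff hTc]
  rw [Complex.ofReal_mul, Complex.ofReal_mul] at hx
  refine mul_left_cancel₀ (mul_ne_zero two_ne_zero hγc) ?_
  push_cast at hx ⊢
  linear_combination hx
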